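/- Fix a real number α < 1 and for n ≥ 2 set A_n = (1/(n−1)!)·∏_{j=0}^{n−2} (2(1−α)+j). Suppose the complex numbers (a_n)_{n≥2} satisfy a_n = (A_n/n) · ∫₀^{2π} e^{i(n−1)t} dν(t) for all n ≥ 2, for some probability measure ν on [0,2π]. Then for every real λ and all integers n ≥ 2: |λ a_n² − a_{2n−1}| ≤ A_{2n−1}/(2n−1) whenever 0 ≤ λ ≤ 2n²·A_{2n−1}/((2n−1)·A_n²), and |λ a_n² − a_{2n−1}| ≤ |λ·A_n²/n² − A_{2n−1}/(2n−1)| whenever λ < 0 or λ > 2n²·A_{2n−1}/((2n−1)·A_n²). -/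

import Mathlib

open MeasureTheory

/-!
Write `p = ∫ X` and `q = ∫ X ^ 2` for a random variable `X` with values in the closed unit disc.
Since `q - p ^ 2 = ∫ (X - p) ^ 2`, its norm is at most the variance `∫ ‖X - p‖ ^ 2 ≤ 1 - ‖p‖ ^ 2`.
Hence `w * p ^ 2 - c * q = (w - c) * p ^ 2 - c * (q - p ^ 2)` has norm at most
`‖w - c‖ * ‖p‖ ^ 2 + ‖c‖ * (1 - ‖p‖ ^ 2)`, a convex combination of `‖w - c‖` and `‖c‖`.
For `X t = exp (i (n - 1) t)` the coefficients `a n` and `a (2 * n - 1)` are multiples of `p` and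
`q`, and the position of `lam` relative to the threshold decides which of the two norms is larger.
-/

section Moments

variable {Ω : Type*} [MeasurableSpace Ω] {ν : Measure Ω} [IsProbabilityMeasure ν]

lemma integral_norm_sub_integral_sq {E : Type*} [NormedAddCommGroup E] [InnerProductSpace ℝ E]
    [CompleteSpace E] {X : Ω → E} (hX : MemLp X 2 ν) :
    ∫ t, ‖X t - ∫ s, X s ∂ν‖ ^ 2 ∂ν = ∫ t, ‖X t‖ ^ 2 ∂ν - ‖∫ t, X t ∂ν‖ ^ 2 := by
  have hX_int : Integrable X ν := hX.integrable one_le_two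
  have hX_sq_int : Integrable (fun t ↦ ‖X t‖ ^ 2) ν := hX.integrable_norm_pow two_ne_zero
  set p := ∫ t, X t ∂ν
  have h_inner_int : Integrable (fun t ↦ 2 * inner ℝ p (X t)) ν :=
    (hX_int.const_inner p).const_mul 2
  calc ∫ t, ‖X t - p‖ ^ 2 ∂ν
      = ∫ t, (‖X t‖ ^ 2 - 2 * inner ℝ p (X t) + ‖p‖ ^ 2) ∂ν := by
        simp only [norm_sub_sq_real, real_inner_comm p]
    _ = ∫ t, ‖X t‖ ^ 2 ∂ν - 2 * inner ℝ p p + ‖p‖ ^ 2 := by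
        rw [integral_add (by exact hX_sq_int.sub h_inner_int) (integrable_const _),
          integral_sub hX_sq_int h_inner_int, integral_const_mul, integral_inner hX_int,
          integral_const, probReal_univ, one_smul]
    _ = ∫ t, ‖X t‖ ^ 2 ∂ν - ‖p‖ ^ 2 := by
        rw [real_inner_self_eq_norm_sq]
        ring

variable {𝕜 : Type*} [RCLike 𝕜] {X : Ω → 𝕜}

lemma integral_sub_integral_sq (hX : MemLp X 2 ν) :
    ∫ t, (X t - ∫ s, X s ∂ν) ^ 2 ∂ν = ∫ t, X t ^ 2 ∂ν - (∫ t, X t ∂ν) ^ 2 := by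
  have hX_int : Integrable X ν := hX.integrable one_le_two
  have hX_sq_int : Integrable (fun t ↦ X t ^ 2) ν := by
    simp only [sq]
    exact hX.integrable_mul hX
  set p := ∫ t, X t ∂ν
  have h_cross_int : Integrable (fun t ↦ 2 * p * X t) ν := hX_int.const_mul (2 * p)
  calc ∫ t, (X t - p) ^ 2 ∂ν
      = ∫ t, (X t ^ 2 - 2 * p * X t + p ^ 2) ∂ν := by
        congr with t
        ring
    _ = ∫ t, X t ^ 2 ∂ν - 2 * p * p + p ^ 2 := by
        rw [integral_add (by exact hX_sq_int.sub h_cross_int) (integrable_const _),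
          integral_sub hX_sq_int h_cross_int, integral_const_mul,
          integral_const, probReal_univ, one_smul]
    _ = ∫ t, X t ^ 2 ∂ν - p ^ 2 := by ring

lemma norm_integral_sq_sub_sq_integral_le (hX : MemLp X 2 ν) :
    ‖∫ t, X t ^ 2 ∂ν - (∫ t, X t ∂ν) ^ 2‖ ≤ ∫ t, ‖X t‖ ^ 2 ∂ν - ‖∫ t, X t ∂ν‖ ^ 2 := by
  rw [← integral_sub_integral_sq hX, ← integral_norm_sub_integral_sq hX]
  simp only [← norm_pow]
  exact norm_integral_le_integral_norm _

lemma norm_mul_sq_integral_sub_mul_integral_sq_le_max (hX : AEStronglyMeasurable X ν)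
    (hX_le : ∀ᵐ t ∂ν, ‖X t‖ ≤ 1) (w c : 𝕜) :
    ‖w * (∫ t, X t ∂ν) ^ 2 - c * ∫ t, X t ^ 2 ∂ν‖ ≤ max ‖w - c‖ ‖c‖ := by
  have hX_memLp : MemLp X 2 ν := .of_bound hX 1 hX_le
  have h_second_moment : ∫ t, ‖X t‖ ^ 2 ∂ν ≤ 1 := by
    have h_mono := integral_mono_ae (hX_memLp.integrable_norm_pow two_ne_zero)
      (integrable_const 1) (hX_le.mono fun t ht ↦ pow_le_one₀ (n := 2) (norm_nonneg (X t)) ht)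
    simpa using h_mono
  have h_variance := norm_integral_sq_sub_sq_integral_le hX_memLp
  set p := ∫ t, X t ∂ν
  set q := ∫ t, X t ^ 2 ∂ν
  have h_variance_le : ‖q - p ^ 2‖ ≤ 1 - ‖p‖ ^ 2 := by linarith
  calc ‖w * p ^ 2 - c * q‖
      = ‖(w - c) * p ^ 2 - c * (q - p ^ 2)‖ := by ring_nf
    _ ≤ ‖w - c‖ * ‖p‖ ^ 2 + ‖c‖ * ‖q - p ^ 2‖ := by
        rw [← norm_pow, ← norm_mul, ← norm_mul]
        exact norm_sub_le _ _
    _ ≤ max ‖w - c‖ ‖c‖ * ‖p‖ ^ 2 + max ‖w - c‖ ‖c‖ * (1 - ‖p‖ ^ 2) := by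
        gcongr
        exacts [le_max_left _ _, le_max_right _ _]
    _ = max ‖w - c‖ ‖c‖ := by ring

end Moments

lemma abs_sub_le_right_iff {x c : ℝ} : |x - c| ≤ c ↔ 0 ≤ x ∧ x ≤ 2 * c := by
  rw [abs_le, neg_le_sub_iff_le_add, sub_le_iff_le_add, two_mul, le_add_iff_nonneg_left]

lemma abs_mul_sub_le_right_iff {x b c : ℝ} (hb : 0 < b) :
    |x * b - c| ≤ c ↔ 0 ≤ x ∧ x ≤ 2 * c / b := by
  rw [abs_sub_le_right_iff, le_div_iff₀ hb, mul_nonneg_iff_of_pos_right hb]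

lemma prod_range_add_natCast_div_factorial_pos {x : ℝ} (hx : 0 < x) (k : ℕ) :
    0 < (∏ j ∈ Finset.range k, (x + (j : ℝ))) / (Nat.factorial k : ℝ) := by
  have : 0 < ∏ j ∈ Finset.range k, (x + (j : ℝ)) := Finset.prod_pos fun j _ ↦ by positivity
  positivity

lemma exp_I_mul_natCast_mul_eq_pow (k : ℕ) (z : ℂ) :
    Complex.exp (Complex.I * k * z) = Complex.exp (z * Complex.I) ^ k := by
  rw [← Complex.exp_nat_mul]
  ring_nf

lemma norm_mul_sq_coeff_sub_coeff_le_max {Ω : Type*} [MeasurableSpace Ω]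
    {ν : Measure Ω} [IsProbabilityMeasure ν] {u : Ω → ℂ} (hu : AEStronglyMeasurable u ν)
    (hu_le : ∀ᵐ t ∂ν, ‖u t‖ ≤ 1) {A : ℕ → ℝ} {a : ℕ → ℂ}
    (ha : ∀ n, 2 ≤ n → a n = ((A n : ℂ) / (n : ℂ)) * ∫ t, u t ^ (n - 1) ∂ν)
    (lam : ℝ) {n : ℕ} (hn : 2 ≤ n) :
    ‖(lam : ℂ) * a n ^ 2 - a (2 * n - 1)‖ ≤
      max |lam * (A n ^ 2 / (n : ℝ) ^ 2) - A (2 * n - 1) / (2 * (n : ℝ) - 1)|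
        |A (2 * n - 1) / (2 * (n : ℝ) - 1)| := by
  have h_coeff : (lam : ℂ) * a n ^ 2 - a (2 * n - 1) =
      ((lam * (A n ^ 2 / (n : ℝ) ^ 2) : ℝ) : ℂ) * (∫ t, u t ^ (n - 1) ∂ν) ^ 2 -
        ((A (2 * n - 1) / (2 * (n : ℝ) - 1) : ℝ) : ℂ) * ∫ t, (u t ^ (n - 1)) ^ 2 ∂ν := by
    have h_exponent : 2 * n - 1 - 1 = (n - 1) * 2 := by omega
    rw [ha n hn, ha (2 * n - 1) (by omega), h_exponent, Nat.cast_sub (by omega)]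
    simp only [pow_mul]
    push_cast
    ring
  have h_pow_le : ∀ᵐ t ∂ν, ‖u t ^ (n - 1)‖ ≤ 1 := hu_le.mono fun t ht ↦ by
    simpa only [norm_pow] using pow_le_one₀ (norm_nonneg _) ht
  simp only [h_coeff, ← Real.norm_eq_abs, ← Complex.norm_real, Complex.ofReal_sub]
  exact norm_mul_sq_integral_sub_mul_integral_sq_le_max (hu.pow (n - 1)) h_pow_le _ _

theorem zalcman_hull_convex_diagonal_general {Ω : Type*} [MeasurableSpace Ω]
    (ν : Measure Ω) [IsProbabilityMeasure ν] {u : Ω → ℂ} (hu : AEStronglyMeasurable u ν)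
    (hu_le : ∀ᵐ t ∂ν, ‖u t‖ ≤ 1) (A : ℕ → ℝ) (a : ℕ → ℂ)
    (ha : ∀ n, 2 ≤ n → a n = ((A n : ℂ) / (n : ℂ)) * ∫ t, u t ^ (n - 1) ∂ν)
    (lam : ℝ) (n : ℕ) (hn : 2 ≤ n) (hAn : A n ≠ 0) (hA_nonneg : 0 ≤ A (2 * n - 1)) :
    (0 ≤ lam ∧ lam ≤ 2 * n ^ 2 * A (2 * n - 1) / ((2 * (n : ℝ) - 1) * A n ^ 2) →
      ‖(lam : ℂ) * a n ^ 2 - a (2 * n - 1)‖ ≤ A (2 * n - 1) / (2 * (n : ℝ) - 1)) ∧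
    (lam < 0 ∨ 2 * n ^ 2 * A (2 * n - 1) / ((2 * (n : ℝ) - 1) * A n ^ 2) < lam →
      ‖(lam : ℂ) * a n ^ 2 - a (2 * n - 1)‖ ≤
        |lam * A n ^ 2 / (n : ℝ) ^ 2 - A (2 * n - 1) / (2 * (n : ℝ) - 1)|) := by
  have hn_two : (2 : ℝ) ≤ n := mod_cast hn
  have h_den_pos : (0 : ℝ) < 2 * n - 1 := by linarith
  have h_max := norm_mul_sq_coeff_sub_coeff_le_max hu hu_le ha lam hn
  rw [abs_of_nonneg (div_nonneg hA_nonneg h_den_pos.le)] at h_max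
  have h_threshold : 2 * n ^ 2 * A (2 * n - 1) / ((2 * (n : ℝ) - 1) * A n ^ 2) =
      2 * (A (2 * n - 1) / (2 * (n : ℝ) - 1)) / (A n ^ 2 / (n : ℝ) ^ 2) := by
    field_simp
  have h_regime := abs_mul_sub_le_right_iff (x := lam) (b := A n ^ 2 / (n : ℝ) ^ 2)
    (c := A (2 * n - 1) / (2 * (n : ℝ) - 1)) (by positivity)
  rw [h_threshold, mul_div_assoc lam]
  refine ⟨fun h ↦ h_max.trans_eq (max_eq_right (h_regime.2 h)),
    fun h ↦ h_max.trans_eq (max_eq_left (le_of_not_ge fun h_le ↦ ?_))⟩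
  obtain ⟨h_nonneg, h_le_threshold⟩ := h_regime.1 h_le
  exact h.elim h_nonneg.not_gt h_le_threshold.not_gt

theorem zalcman_hull_convex_diagonal
    (α : ℝ) (hα : α < 1) (A : ℕ → ℝ)
    (hA : ∀ n, A n = (∏ j ∈ Finset.range (n - 1), (2 * (1 - α) + (j : ℝ))) /
      (Nat.factorial (n - 1) : ℝ))
    (ν : Measure (Set.Icc (0 : ℝ) (2 * Real.pi))) [IsProbabilityMeasure ν]
    (a : ℕ → ℂ)
    (ha : ∀ n, 2 ≤ n →
      a n = ((A n : ℂ) / (n : ℂ)) *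
        ∫ t, Complex.exp (Complex.I * (n - 1 : ℕ) * ((t : ℝ) : ℂ)) ∂ν)
    (lam : ℝ) (n : ℕ) (hn : 2 ≤ n) :
    (0 ≤ lam ∧ lam ≤ 2 * n ^ 2 * A (2 * n - 1) / ((2 * (n : ℝ) - 1) * A n ^ 2) →
      ‖(lam : ℂ) * a n ^ 2 - a (2 * n - 1)‖ ≤ A (2 * n - 1) / (2 * (n : ℝ) - 1)) ∧
    (lam < 0 ∨ 2 * n ^ 2 * A (2 * n - 1) / ((2 * (n : ℝ) - 1) * A n ^ 2) < lam →
      ‖(lam : ℂ) * a n ^ 2 - a (2 * n - 1)‖ ≤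
        |lam * A n ^ 2 / (n : ℝ) ^ 2 - A (2 * n - 1) / (2 * (n : ℝ) - 1)|) := by
  have hA_pos (m : ℕ) : 0 < A m :=
    hA m ▸ prod_range_add_natCast_div_factorial_pos (by linarith) (m - 1)
  simp only [exp_I_mul_natCast_mul_eq_pow] at ha
  exact zalcman_hull_convex_diagonal_general ν (u := fun t ↦ Complex.exp ((t : ℝ) * Complex.I))
    (by fun_prop) (.of_forall fun t ↦ (Complex.norm_exp_ofReal_mul_I t).le) A a ha lam n hn
    (hA_pos n).ne' (hA_pos (2 * n - 1)).le
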